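/- For every a,b,c ∈ ℂ and every point P of Z(F_{m,3}), the polynomial C_{R,m} vanishes at (x,y,z) = P; that is, substituting each of the 3m+3 points of Z(F_{m,3}) for (x,y,z) in C_{R,m} yields the zero polynomial in ℂ[a,b,c]. -/

import Mathlib

/-- The augmented Fermat configuration `Z(F_{m,3})` of `3m+3` points. -/
def Zm3 (m : ℕ) : Set (Fin 3 → ℂ) :=
  {![1,0,0], ![0,1,0], ![0,0,1]} ∪
    {v | ∃ l : ℂ, l ^ m = (-1) ^ m ∧ (v = ![1,l,0] ∨ v = ![0,1,l] ∨ v = ![l,0,1])}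

/-- The unexpected curve `C_{R,m}` of degree `m+2` with multiplicity `m+1` at the general
point `R = (a:b:c)`, evaluated at `(a,b,c,x,y,z)`. -/
noncomputable def CRm (m : ℕ) (a b c x y z : ℂ) : ℂ :=
  x*y*z *
    ( (m+1 : ℂ) * ( a*(b^m + (-1:ℂ)^(m+1)*c^m)*x^(m-1)
                  + b*(a^m + (-1:ℂ)^(m+1)*c^m)*y^(m-1)
                  + c*(a^m + (-1:ℂ)^(m+1)*b^m)*z^(m-1) )
    + ∑ i ∈ Finset.Icc 1 (m-2), (-1:ℂ)^(i+1) * (Nat.choose (m+1) (i+1) : ℂ) *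
        ( a^(m-i)*b^(i+1)*x^i*y^(m-i-1)
        + a^(m-i)*c^(i+1)*x^i*z^(m-i-1)
        + b^(m-i)*c^(i+1)*y^i*z^(m-i-1) ) )
  + a^(m+1) * (y*z*(y^m - (-z)^m))
  + b^(m+1) * (z*x*(z^m - (-x)^m))
  + c^(m+1) * (x*y*(x^m - (-y)^m))

/-! Every point of `Zm3 m` has a zero coordinate, so of `C_{R,m}` only the combination
`a^(m+1) G_x + b^(m+1) G_y + c^(m+1) G_z` survives there. Each `G` is the binary form
`u v (u^m - (-v)^m)` in two cyclically consecutive coordinates; at a point of `Zm3 m` either one of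
these two is zero, or they are `(1, λ)` with `(-λ)^m = 1`. -/

section FermatForm

variable {R : Type*} [Ring R]

/-- The binary form `u v (u^m - (-v)^m)`. The generators `G_x`, `G_y`, `G_z` of the paper are its
values at `(y, z)`, `(z, x)` and `(x, y)`. -/
def fermatForm (m : ℕ) (u v : R) : R :=
  u * v * (u ^ m - (-v) ^ m)

@[simp]
lemma fermatForm_zero_left (m : ℕ) (v : R) : fermatForm m 0 v = 0 := by
  rw [fermatForm, zero_mul, zero_mul]

@[simp]
lemma fermatForm_zero_right (m : ℕ) (u : R) : fermatForm m u 0 = 0 := by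
  rw [fermatForm, mul_zero, zero_mul]

lemma fermatForm_eq_zero_of_pow_eq {m : ℕ} {u v : R} (h : u ^ m = (-v) ^ m) :
    fermatForm m u v = 0 := by
  rw [fermatForm, h, sub_self, mul_zero]

lemma fermatForm_one_left_eq_zero {m : ℕ} {l : R} (hl : l ^ m = (-1) ^ m) :
    fermatForm m 1 l = 0 := by
  apply fermatForm_eq_zero_of_pow_eq
  calc (1 : R) ^ m = (-1) ^ m * (-1) ^ m := by rw [← neg_pow, neg_neg]
    _ = (-1) ^ m * l ^ m := by rw [hl]
    _ = (-l) ^ m := (neg_pow l m).symm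

end FermatForm

lemma mul_coords_eq_zero_of_mem_Zm3 {m : ℕ} {p : Fin 3 → ℂ} (hp : p ∈ Zm3 m) :
    p 0 * p 1 * p 2 = 0 := by
  rcases hp with (rfl | rfl | rfl) | ⟨l, -, rfl | rfl | rfl⟩ <;> simp

lemma fermatForm_eq_zero_of_mem_Zm3 {m : ℕ} {p : Fin 3 → ℂ} (hp : p ∈ Zm3 m) (i : Fin 3) :
    fermatForm m (p i) (p (i + 1)) = 0 := by
  rcases hp with hp | ⟨l, hl, hp⟩
  · rcases hp with rfl | rfl | rfl <;> fin_cases i <;> simp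
  · have h_one : fermatForm m 1 l = 0 := fermatForm_one_left_eq_zero hl
    rcases hp with rfl | rfl | rfl <;> fin_cases i <;> simp [h_one]

lemma CRm_eq_of_mul_eq_zero (m : ℕ) (a b c : ℂ) {x y z : ℂ} (hxyz : x * y * z = 0) :
    CRm m a b c x y z =
      a ^ (m + 1) * fermatForm m y z + b ^ (m + 1) * fermatForm m z x +
        c ^ (m + 1) * fermatForm m x y := by
  simp only [CRm, fermatForm, hxyz, zero_mul, zero_add]

theorem CRm_vanishes_on_Zm3_general (m : ℕ) (a b c : ℂ) :
    ∀ p ∈ Zm3 m, CRm m a b c (p 0) (p 1) (p 2) = 0 := by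
  intro p hp
  have hxy : fermatForm m (p 0) (p 1) = 0 := fermatForm_eq_zero_of_mem_Zm3 hp 0
  have hyz : fermatForm m (p 1) (p 2) = 0 := fermatForm_eq_zero_of_mem_Zm3 hp 1
  have hzx : fermatForm m (p 2) (p 0) = 0 := fermatForm_eq_zero_of_mem_Zm3 hp 2
  rw [CRm_eq_of_mul_eq_zero m a b c (mul_coords_eq_zero_of_mem_Zm3 hp), hyz, hzx, hxy]
  simp only [mul_zero, add_zero]

/-- For every `a,b,c ∈ ℂ`, the polynomial `C_{R,m}` vanishes at every point of `Z(F_{m,3})`. -/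
theorem CRm_vanishes_on_Zm3 (m : ℕ) (hm : 5 ≤ m) (a b c : ℂ) :
    ∀ p ∈ Zm3 m, CRm m a b c (p 0) (p 1) (p 2) = 0 := by
  exact CRm_vanishes_on_Zm3_general m a b c
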